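/- arXiv:1406.1977 — 2 statements merged into one kernel-verified Lean document; each statement's English description precedes it below -/
import Mathlib

section
/- Let m ≥ 2 be an even integer and let p be a real number with p ≥ 2m. The m-homogeneous polynomial P_m on ℝ^m defined by P_m(x_1,…,x_m) = (x_1² − x_2²)(x_3² − x_4²)⋯(x_{m−1}² − x_m²) satisfies sup{|P_m(x)| : ‖x‖_p ≤ 1} = (m/2)^{−m/p}, the supremum being attained at the point whose odd-indexed coordinates equal (m/2)^{−1/p} and whose even-indexed coordinates are 0. -/
open Finset

/-- The `ℓ_p` norm on `ℝ^n` for a real exponent `p`. -/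
noncomputable def lpNorm {n : ℕ} (p : ℝ) (x : Fin n → ℝ) : ℝ :=
  (∑ i, |x i| ^ p) ^ (1 / p)

/-!
Since `|a² - b²| ≤ max (a²) (b²)`, the factors `d_j` of `P_m(x)` satisfy
`∑ |d_j|^{p/2} ≤ ∑ |x_i|^p ≤ 1`, and AM-GM applied to the `m/2` numbers `|d_j|^{p/2}` bounds their
product. Both inequalities are equalities at a point that vanishes in one coordinate of each pair
and is constant in the other.
-/

theorem prod_le_sum_div_card_pow {ι : Type*} (s : Finset ι) {z : ι → ℝ} (hz : ∀ i ∈ s, 0 ≤ z i) :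
    ∏ i ∈ s, z i ≤ ((∑ i ∈ s, z i) / #s) ^ #s := by
  rcases s.eq_empty_or_nonempty with rfl | hs
  · simp
  have hcard : (0 : ℝ) < #s := by exact_mod_cast hs.card_pos
  have amgm : (∏ i ∈ s, z i) ^ (#s : ℝ)⁻¹ ≤ (∑ i ∈ s, z i) / #s := by
    simpa using Real.geom_mean_le_arith_mean s (fun _ => 1) z (by simp) (by simpa using hcard) hz
  rwa [Real.rpow_inv_le_iff_of_pos (prod_nonneg hz) (div_nonneg (sum_nonneg hz) hcard.le) hcard,
    Real.rpow_natCast] at amgm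

theorem prod_le_card_rpow_of_sum_rpow_le_one {ι : Type*} (s : Finset ι) {z : ι → ℝ} {q : ℝ}
    (hq : 0 < q) (hz : ∀ i ∈ s, 0 ≤ z i) (hsum : ∑ i ∈ s, z i ^ q ≤ 1) :
    ∏ i ∈ s, z i ≤ (#s : ℝ) ^ (-(#s : ℝ) / q) := by
  have hzq : ∀ i ∈ s, 0 ≤ z i ^ q := fun i hi => Real.rpow_nonneg (hz i hi) q
  rw [← Real.rpow_le_rpow_iff (prod_nonneg hz) (by positivity) hq]
  calc (∏ i ∈ s, z i) ^ q = ∏ i ∈ s, z i ^ q := (Real.finsetProd_rpow s z hz q).symm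
    _ ≤ ((∑ i ∈ s, z i ^ q) / #s) ^ #s := prod_le_sum_div_card_pow s hzq
    _ ≤ (1 / #s) ^ #s := by gcongr; exact div_nonneg (sum_nonneg hzq) (Nat.cast_nonneg _)
    _ = ((#s : ℝ) ^ (-(#s : ℝ) / q)) ^ q := by
      rw [← Real.rpow_mul (Nat.cast_nonneg _), div_mul_cancel₀ _ hq.ne',
        Real.rpow_neg (Nat.cast_nonneg _), Real.rpow_natCast, one_div, inv_pow]

theorem abs_sub_rpow_le_rpow_add_rpow {a b q : ℝ} (ha : 0 ≤ a) (hb : 0 ≤ b) (hq : 0 ≤ q) :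
    |a - b| ^ q ≤ a ^ q + b ^ q := by
  wlog hab : b ≤ a generalizing a b
  · rw [abs_sub_comm, add_comm]
    exact this hb ha (le_of_not_ge hab)
  calc |a - b| ^ q ≤ a ^ q :=
        Real.rpow_le_rpow (abs_nonneg _) (abs_sub_le_of_nonneg_of_le ha le_rfl hb hab) hq
    _ ≤ a ^ q + b ^ q := le_add_of_nonneg_right (Real.rpow_nonneg hb q)

theorem sq_rpow_half (a p : ℝ) : (a ^ 2) ^ (p / 2) = |a| ^ p := by
  rw [Real.rpow_div_two_eq_sqrt p (sq_nonneg a), Real.sqrt_sq_eq_abs]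

theorem lpNorm_le_one_iff {n : ℕ} {p : ℝ} (hp : 0 < p) (x : Fin n → ℝ) :
    lpNorm p x ≤ 1 ↔ ∑ i, |x i| ^ p ≤ 1 := by
  rw [lpNorm, one_div, Real.rpow_inv_le_iff_of_pos (by positivity) zero_le_one hp, Real.one_rpow]

section Pairs

variable {m : ℕ}

/-- The first (0-based even) index of the `j`-th pair of consecutive indices below `m`. -/
def pairFst (j : Fin (m / 2)) : Fin m := ⟨2 * j.1, by omega⟩

/-- The second (0-based odd) index of the `j`-th pair of consecutive indices below `m`. -/
def pairSnd (j : Fin (m / 2)) : Fin m := ⟨2 * j.1 + 1, by omega⟩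

/-- The polynomial `P_m(x) = (x_1² - x_2²)(x_3² - x_4²)⋯`, one factor per pair of consecutive
coordinates; the last coordinate is ignored when `m` is odd. -/
def pairProduct (x : Fin m → ℝ) : ℝ :=
  ∏ j : Fin (m / 2), (x (pairFst j) ^ 2 - x (pairSnd j) ^ 2)

/-- The vector with entry `c` at the 0-based even indices and `0` elsewhere; for a suitable `c` it
maximizes `|pairProduct|` on the `ℓ_p` unit ball. -/
def evenIndexConst (m : ℕ) (c : ℝ) : Fin m → ℝ := fun i => if i.1 % 2 = 0 then c else 0

@[simp]
theorem evenIndexConst_pairFst (c : ℝ) (j : Fin (m / 2)) : evenIndexConst m c (pairFst j) = c := by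
  simp [evenIndexConst, pairFst]

@[simp]
theorem evenIndexConst_pairSnd (c : ℝ) (j : Fin (m / 2)) : evenIndexConst m c (pairSnd j) = 0 := by
  simp [evenIndexConst, pairSnd, Nat.add_mod]

theorem sum_eq_sum_pairs {M : Type*} [AddCommMonoid M] (hm : Even m) (f : Fin m → M) :
    ∑ i, f i = ∑ j : Fin (m / 2), (f (pairFst j) + f (pairSnd j)) := by
  let e : Fin (m / 2) × Fin 2 ≃ Fin m :=
    finProdFinEquiv.trans (finCongr (Nat.div_two_mul_two_of_even hm))
  have he₀ (j : Fin (m / 2)) : e (j, 0) = pairFst j := by ext; simp [e, pairFst]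
  have he₁ (j : Fin (m / 2)) : e (j, 1) = pairSnd j := by ext; simp [e, pairSnd, add_comm]
  simp only [← e.sum_comp f, Fintype.sum_prod_type, Fin.sum_univ_two, he₀, he₁]

theorem cast_div_two_of_even (hm : Even m) : ((m / 2 : ℕ) : ℝ) = (m : ℝ) / 2 :=
  Nat.cast_div_charZero hm.two_dvd

theorem pairProduct_evenIndexConst (hm : Even m) (c : ℝ) :
    pairProduct (evenIndexConst m c) = c ^ m := by
  simp [pairProduct, ← pow_mul, Nat.two_mul_div_two_of_even hm]

theorem sum_abs_evenIndexConst_rpow (hm : Even m) (c : ℝ) {p : ℝ} (hp : p ≠ 0) :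
    ∑ i, |evenIndexConst m c i| ^ p = (m : ℝ) / 2 * |c| ^ p := by
  simp [sum_eq_sum_pairs hm, Real.zero_rpow hp, cast_div_two_of_even hm]

theorem sum_abs_sq_sub_sq_rpow_le (hm : Even m) (x : Fin m → ℝ) {p : ℝ} (hp : 0 ≤ p) :
    ∑ j : Fin (m / 2), |x (pairFst j) ^ 2 - x (pairSnd j) ^ 2| ^ (p / 2) ≤ ∑ i, |x i| ^ p := by
  rw [sum_eq_sum_pairs hm]
  refine sum_le_sum fun j _ => ?_
  simpa only [sq_rpow_half] using abs_sub_rpow_le_rpow_add_rpow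
    (sq_nonneg (x (pairFst j))) (sq_nonneg (x (pairSnd j))) (div_nonneg hp zero_le_two)

theorem abs_pairProduct_le_of_lpNorm_le_one (hm : Even m) {p : ℝ} (hp : 0 < p) {x : Fin m → ℝ}
    (hx : lpNorm p x ≤ 1) : |pairProduct x| ≤ ((m : ℝ) / 2) ^ (-(m : ℝ) / p) := by
  have hsum := (sum_abs_sq_sub_sq_rpow_le hm x hp.le).trans ((lpNorm_le_one_iff hp x).1 hx)
  have hprod := prod_le_card_rpow_of_sum_rpow_le_one univ (half_pos hp)
    (fun _ _ => abs_nonneg _) hsum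
  rwa [card_univ, Fintype.card_fin, cast_div_two_of_even hm, ← neg_div,
    div_div_div_cancel_right₀ two_ne_zero, ← abs_prod] at hprod

end Pairs

theorem even_product_polynomial_norm_general {m : ℕ} (hm : Even m) {p : ℝ} (hp : 0 < p) :
    let x₀ := evenIndexConst m (((m : ℝ) / 2) ^ (-(1 : ℝ) / p))
    lpNorm p x₀ ≤ 1 ∧ pairProduct x₀ = ((m : ℝ) / 2) ^ (-(m : ℝ) / p) ∧
      ∀ x : Fin m → ℝ, lpNorm p x ≤ 1 → |pairProduct x| ≤ ((m : ℝ) / 2) ^ (-(m : ℝ) / p) := by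
  have hk : (0 : ℝ) ≤ (m : ℝ) / 2 := by positivity
  refine ⟨?_, ?_, fun x hx => abs_pairProduct_le_of_lpNorm_le_one hm hp hx⟩
  · rw [lpNorm_le_one_iff hp, sum_abs_evenIndexConst_rpow hm _ hp.ne',
      abs_of_nonneg (Real.rpow_nonneg hk _), ← Real.rpow_mul hk, div_mul_cancel₀ _ hp.ne',
      Real.rpow_neg_one]
    exact mul_inv_le_one
  · rw [pairProduct_evenIndexConst hm, ← Real.rpow_natCast, ← Real.rpow_mul hk,
      div_mul_eq_mul_div, neg_one_mul]

/-- For even `m ≥ 2` and `p ≥ 2m`, the polynomial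
`P_m(x) = (x_1² - x_2²)⋯(x_{m-1}² - x_m²)` on `ℝ^m` has sup norm `(m/2)^{-m/p}` over the
unit ball of `ℓ_p^m`, attained at the point whose odd-indexed coordinates (0-based even
indices) equal `(m/2)^{-1/p}` and whose remaining coordinates vanish. -/
theorem even_product_polynomial_norm (m : ℕ) (hm : 2 ≤ m) (hme : Even m)
    (p : ℝ) (hp : 2 * (m : ℝ) ≤ p) :
    let P : (Fin m → ℝ) → ℝ := fun x =>
      ∏ j : Fin (m / 2),
        (x ⟨2 * j.1, by have := j.2; omega⟩ ^ 2 - x ⟨2 * j.1 + 1, by have := j.2; omega⟩ ^ 2)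
    let x₀ : Fin m → ℝ := fun i => if i.1 % 2 = 0 then ((m : ℝ) / 2) ^ (-(1 : ℝ) / p) else 0
    lpNorm p x₀ ≤ 1 ∧ P x₀ = ((m : ℝ) / 2) ^ (-(m : ℝ) / p) ∧
      ∀ x : Fin m → ℝ, lpNorm p x ≤ 1 → |P x| ≤ ((m : ℝ) / 2) ^ (-(m : ℝ) / p) :=
  even_product_polynomial_norm_general hme (by rify at hm; linarith)
end

section
/- Let m ≥ 2 be an integer and let p be a real number with 2m ≤ p < ∞. If D > 0 is such that for every n ≥ 1 and every m-homogeneous polynomial P(x) = ∑_{|α|=m} a_α x^α on the real space ℓ_p^n one has (∑_{|α|=m} |a_α|^{2mp/(mp+p−2m)})^{(mp+p−2m)/(2mp)} ≤ D·‖P‖, then (2^{1/16})^m ≤ 2^{((mp+p−6m+4)/(4p))·((m−1)/m)} ≤ D. -/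
open Finset

/-- The sup norm of the `m`-homogeneous polynomial with coefficients `a`
over the unit ball of the real space `ℓ_p^n`. -/
noncomputable def polyNorm (p : ℝ) (m n : ℕ) (a : (Fin n → ℕ) → ℝ) : ℝ :=
  sSup {y : ℝ | ∃ x : Fin n → ℝ, lpNorm p x ≤ 1 ∧
    y = |∑ α ∈ Finset.Nat.antidiagonalTuple n m, a α * ∏ i, x i ^ α i|}

/-!
Test the inequality on the binary form `x ^ (m % 2) * (x ^ 2 - y ^ 2) ^ (m / 2)`. It is bounded by
`1` on the square `[-1, 1]²`, hence on every `ℓ_p` ball, while its coefficients are signed binomials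
whose squares add up to the central binomial coefficient of `m / 2`. Since the Hardy–Littlewood
exponent is at most `2` for `p ≥ 2m`, the coefficient norm dominates the `ℓ_2` norm, which is at
least `2 ^ (m / 4)` unless `m = 3`. For `m = 3` the two nonzero coefficients are `±1`, and the
coefficient norm is computed exactly.
-/

section PowerSums

variable {ι : Type*} (t : Finset ι)

lemma rpow_sum_le_sum_rpow {f : ι → ℝ} (hf : ∀ i ∈ t, 0 ≤ f i) {r : ℝ} (hr : 0 < r)
    (hr1 : r ≤ 1) : (∑ i ∈ t, f i) ^ r ≤ ∑ i ∈ t, f i ^ r :=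
  Finset.le_sum_of_subadditive_on_pred (fun x : ℝ => x ^ r) (0 ≤ ·) (Real.zero_rpow hr.ne').le
    (fun _ _ hx hy => Real.rpow_add_le_add_rpow hx hy hr.le hr1) (fun _ _ => add_nonneg) f hf

lemma rpow_sum_abs_rpow_le_of_exponent_le (a : ι → ℝ) {s q : ℝ} (hs : 0 < s) (hsq : s ≤ q) :
    (∑ i ∈ t, |a i| ^ q) ^ (1 / q) ≤ (∑ i ∈ t, |a i| ^ s) ^ (1 / s) := by
  have hq : 0 < q := hs.trans_le hsq
  have sum_rpow_nonneg : 0 ≤ ∑ i ∈ t, |a i| ^ q := Finset.sum_nonneg fun i _ => by positivity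
  have subadditive : (∑ i ∈ t, |a i| ^ q) ^ (s / q) ≤ ∑ i ∈ t, |a i| ^ s := by
    refine (rpow_sum_le_sum_rpow t (fun i _ => by positivity) (div_pos hs hq)
      ((div_le_one hq).2 hsq)).trans_eq (Finset.sum_congr rfl fun i _ => ?_)
    rw [← Real.rpow_mul (abs_nonneg _), mul_div_cancel₀ _ hq.ne']
  calc (∑ i ∈ t, |a i| ^ q) ^ (1 / q)
      = ((∑ i ∈ t, |a i| ^ q) ^ (s / q)) ^ (1 / s) := by
        rw [← Real.rpow_mul sum_rpow_nonneg]
        congr 1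
        field_simp
    _ ≤ (∑ i ∈ t, |a i| ^ s) ^ (1 / s) := by gcongr

end PowerSums

section Norms

/-- The `ℓ_s` norm of the coefficients of the `m`-homogeneous polynomial in `n` variables with
coefficient function `a`: the left-hand side of the Hardy–Littlewood inequality. -/
noncomputable def coeffNorm (s : ℝ) (m n : ℕ) (a : (Fin n → ℕ) → ℝ) : ℝ :=
  (∑ α ∈ Finset.Nat.antidiagonalTuple n m, |a α| ^ s) ^ (1 / s)

lemma polyNorm_nonneg (p : ℝ) (m n : ℕ) (a : (Fin n → ℕ) → ℝ) : 0 ≤ polyNorm p m n a :=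
  Real.sSup_nonneg fun _ ⟨_, _, hy⟩ => hy ▸ abs_nonneg _

variable {n : ℕ} {p : ℝ}

lemma abs_le_lpNorm (hp : 0 < p) (x : Fin n → ℝ) (i : Fin n) : |x i| ≤ lpNorm p x := by
  have term_le_sum : |x i| ^ p ≤ ∑ j, |x j| ^ p :=
    Finset.single_le_sum (f := fun j => |x j| ^ p) (fun j _ => by positivity) (Finset.mem_univ i)
  calc |x i| = (|x i| ^ p) ^ (1 / p) := by
        rw [one_div, Real.rpow_rpow_inv (abs_nonneg _) hp.ne']
    _ ≤ lpNorm p x := Real.rpow_le_rpow (by positivity) term_le_sum (by positivity)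

lemma polyNorm_le_of_forall_abs_le_one (hp : 0 < p) {m : ℕ} {a : (Fin n → ℕ) → ℝ} {C : ℝ}
    (hC : 0 ≤ C)
    (h : ∀ x : Fin n → ℝ, (∀ i, |x i| ≤ 1) →
      |∑ α ∈ Finset.Nat.antidiagonalTuple n m, a α * ∏ i, x i ^ α i| ≤ C) :
    polyNorm p m n a ≤ C := by
  refine Real.sSup_le ?_ hC
  rintro _ ⟨x, hx, rfl⟩
  exact h x fun i => (abs_le_lpNorm hp x i).trans hx

end Norms

section TestForm

/-- The coefficients of the test form `x ^ (m % 2) * (x ^ 2 - y ^ 2) ^ (m / 2)` of degree `m`, where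
`α` indexes the monomial `x ^ α 0 * y ^ α 1`. Only the values at `α 0 + α 1 = m` are meaningful. -/
noncomputable def sqSubSqPowCoeff (m : ℕ) (α : Fin 2 → ℕ) : ℝ :=
  if Even (α 1) then (-1) ^ (α 1 / 2) * ((m / 2).choose (α 1 / 2) : ℝ) else 0

lemma sqSubSqPowCoeff_two_mul (m i j : ℕ) :
    sqSubSqPowCoeff m ![i, 2 * j] = (-1) ^ j * ((m / 2).choose j : ℝ) := by
  simp [sqSubSqPowCoeff]

lemma sqSubSqPowCoeff_of_not_even (m : ℕ) {α : Fin 2 → ℕ} (hα : ¬ Even (α 1)) :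
    sqSubSqPowCoeff m α = 0 :=
  if_neg hα

lemma abs_sqSubSqPowCoeff_two_mul (m i j : ℕ) :
    |sqSubSqPowCoeff m ![i, 2 * j]| = (m / 2).choose j := by
  simp [sqSubSqPowCoeff_two_mul, abs_mul]

lemma sum_antidiagonalTuple_two_eq_sum_even {M : Type*} [AddCommMonoid M] (m : ℕ)
    {f : (Fin 2 → ℕ) → M} (hf : ∀ α, ¬ Even (α 1) → f α = 0) :
    ∑ α ∈ Finset.Nat.antidiagonalTuple 2 m, f α
      = ∑ j ∈ Finset.range (m / 2 + 1), f ![m - 2 * j, 2 * j] := by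
  symm
  refine Finset.sum_of_injOn (fun j => ![m - 2 * j, 2 * j]) ?_ ?_ ?_ fun _ _ => rfl
  · intro i _ j _ hij
    simpa using congrFun hij 1
  · intro j hj
    simp only [Finset.coe_range, Set.mem_Iio] at hj
    simp only [Finset.mem_coe, Finset.Nat.mem_antidiagonalTuple, Fin.sum_univ_two,
      Matrix.cons_val_zero, Matrix.cons_val_one]
    omega
  · intro α hα not_mem_image
    refine hf α fun ⟨j, hj⟩ => not_mem_image ⟨j, ?_, ?_⟩
    all_goals rw [Finset.Nat.mem_antidiagonalTuple, Fin.sum_univ_two] at hα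
    · simp only [Finset.coe_range, Set.mem_Iio]
      omega
    · refine funext (Fin.forall_fin_two.2 ⟨?_, ?_⟩)
      · change m - 2 * j = α 0
        omega
      · change 2 * j = α 1
        omega

lemma sum_sqSubSqPowCoeff_mul_prod_pow (m : ℕ) (x : Fin 2 → ℝ) :
    ∑ α ∈ Finset.Nat.antidiagonalTuple 2 m, sqSubSqPowCoeff m α * ∏ i, x i ^ α i
      = x 0 ^ (m % 2) * (x 0 ^ 2 - x 1 ^ 2) ^ (m / 2) := by
  rw [sum_antidiagonalTuple_two_eq_sum_even m
      fun α hα => by rw [sqSubSqPowCoeff_of_not_even m hα, zero_mul],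
    sub_eq_neg_add, add_pow, Finset.mul_sum]
  refine Finset.sum_congr rfl fun j hj => ?_
  have degree_split : m - 2 * j = m % 2 + 2 * (m / 2 - j) := by
    rw [Finset.mem_range] at hj
    omega
  simp only [sqSubSqPowCoeff_two_mul, Fin.prod_univ_two, Matrix.cons_val_zero, Matrix.cons_val_one]
  rw [degree_split, neg_pow (x 1 ^ 2), pow_add, pow_mul, pow_mul]
  ring

lemma polyNorm_sqSubSqPowCoeff_le_one {p : ℝ} (hp : 0 < p) (m : ℕ) :
    polyNorm p m 2 (sqSubSqPowCoeff m) ≤ 1 := by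
  refine polyNorm_le_of_forall_abs_le_one hp zero_le_one fun x hx => ?_
  have sq_le_one (i : Fin 2) : x i ^ 2 ≤ 1 := (sq_le_one_iff_abs_le_one _).2 (hx i)
  have abs_sq_sub_sq_le_one : |x 0 ^ 2 - x 1 ^ 2| ≤ 1 :=
    abs_sub_le_of_nonneg_of_le (sq_nonneg _) (sq_le_one 0) (sq_nonneg _) (sq_le_one 1)
  rw [sum_sqSubSqPowCoeff_mul_prod_pow, abs_mul, abs_pow, abs_pow]
  exact mul_le_one₀ (pow_le_one₀ (abs_nonneg _) (hx 0)) (by positivity)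
    (pow_le_one₀ (abs_nonneg _) abs_sq_sub_sq_le_one)

lemma sum_abs_sqSubSqPowCoeff_rpow (m : ℕ) {s : ℝ} (hs : s ≠ 0) :
    ∑ α ∈ Finset.Nat.antidiagonalTuple 2 m, |sqSubSqPowCoeff m α| ^ s
      = ∑ j ∈ Finset.range (m / 2 + 1), ((m / 2).choose j : ℝ) ^ s := by
  rw [sum_antidiagonalTuple_two_eq_sum_even m fun α hα => by
    rw [sqSubSqPowCoeff_of_not_even m hα, abs_zero, Real.zero_rpow hs]]
  simp only [abs_sqSubSqPowCoeff_two_mul]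

lemma sum_abs_sqSubSqPowCoeff_rpow_two (m : ℕ) :
    ∑ α ∈ Finset.Nat.antidiagonalTuple 2 m, |sqSubSqPowCoeff m α| ^ (2 : ℝ)
      = (m / 2).centralBinom := by
  rw [sum_abs_sqSubSqPowCoeff_rpow m two_ne_zero, Nat.centralBinom_eq_two_mul_choose,
    ← Nat.sum_range_choose_sq]
  push_cast
  simp only [Real.rpow_two]

lemma sum_abs_sqSubSqPowCoeff_three_rpow {s : ℝ} (hs : s ≠ 0) :
    ∑ α ∈ Finset.Nat.antidiagonalTuple 2 3, |sqSubSqPowCoeff 3 α| ^ s = 2 := by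
  rw [sum_abs_sqSubSqPowCoeff_rpow 3 hs]
  norm_num [Finset.sum_range_succ]

end TestForm

section CentralBinomial

lemma two_mul_centralBinom_le_centralBinom_succ (k : ℕ) :
    2 * k.centralBinom ≤ (k + 1).centralBinom := by
  refine Nat.le_of_mul_le_mul_left ?_ k.succ_pos
  calc (k + 1) * (2 * k.centralBinom) = 2 * (k + 1) * k.centralBinom := by ring
    _ ≤ 2 * (2 * k + 1) * k.centralBinom := by gcongr; omega
    _ = (k + 1) * (k + 1).centralBinom := (Nat.succ_mul_centralBinom_succ k).symm

lemma two_pow_two_mul_add_one_le_centralBinom_sq {k : ℕ} (hk : 2 ≤ k) :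
    2 ^ (2 * k + 1) ≤ k.centralBinom ^ 2 := by
  induction k, hk using Nat.le_induction with
  | base => decide
  | succ k _ ih =>
    calc 2 ^ (2 * (k + 1) + 1) = 2 ^ 2 * 2 ^ (2 * k + 1) := by ring
      _ ≤ 2 ^ 2 * k.centralBinom ^ 2 := by gcongr
      _ = (2 * k.centralBinom) ^ 2 := by ring
      _ ≤ (k + 1).centralBinom ^ 2 := by
        gcongr
        exact two_mul_centralBinom_le_centralBinom_succ k

lemma two_pow_le_centralBinom_half_sq {m : ℕ} (hm : 2 ≤ m) (hm3 : m ≠ 3) :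
    2 ^ m ≤ (m / 2).centralBinom ^ 2 := by
  obtain rfl | hm4 : m = 2 ∨ 4 ≤ m := by omega
  · decide
  · calc 2 ^ m ≤ 2 ^ (2 * (m / 2) + 1) := by gcongr <;> omega
      _ ≤ (m / 2).centralBinom ^ 2 := two_pow_two_mul_add_one_le_centralBinom_sq (by omega)

end CentralBinomial

section Exponents

/-- The Hardy–Littlewood exponent `2mp / (mp + p - 2m)` of the coefficient norm, for forms of
degree `m` on `ℓ_p`. The degree is a real number here, so that no casts occur. -/
noncomputable def hlExponent (m p : ℝ) : ℝ :=
  2 * m * p / (m * p + p - 2 * m)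

/-- The exponent of `2` in the lower bound for the Hardy–Littlewood constant. -/
noncomputable def hlLowerExponent (m p : ℝ) : ℝ :=
  ((m * p + p - 6 * m + 4) / (4 * p)) * ((m - 1) / m)

lemma one_div_hlExponent (m p : ℝ) : 1 / hlExponent m p = (m * p + p - 2 * m) / (2 * m * p) :=
  one_div_div _ _

variable {m p : ℝ}

lemma hlExponent_pos (hm : 0 < m) (hp : 2 * m ≤ p) : 0 < hlExponent m p := by
  have p_pos : 0 < p := by linarith
  have denominator_pos : 0 < m * p + p - 2 * m := by linarith [mul_pos hm p_pos]
  unfold hlExponent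
  positivity

lemma hlExponent_le_two (hm : 0 < m) (hp : 2 * m ≤ p) : hlExponent m p ≤ 2 := by
  have mp_pos : 0 < m * p := mul_pos hm (by linarith)
  rw [hlExponent, div_le_iff₀ (by linarith)]
  linarith

lemma div_sixteen_le_hlLowerExponent (hm : 2 ≤ m) (hp : 2 * m ≤ p) :
    m / 16 ≤ hlLowerExponent m p := by
  have p_pos : 0 < p := by linarith
  have increasing_in_p : 0 ≤ (p - 2 * m) * (3 * m ^ 2 - 4) :=
    mul_nonneg (by linarith) (by nlinarith)
  have nonneg_at_two_mul : 0 ≤ (m - 2) * (3 * (m - 1) ^ 2 + 1) :=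
    mul_nonneg (by linarith) (by positivity)
  rw [hlLowerExponent, div_mul_div_comm, div_le_div_iff₀ (by norm_num) (by positivity)]
  linarith

lemma hlLowerExponent_le_div_four (hm : 1 ≤ m) (hp : 0 < p) : hlLowerExponent m p ≤ m / 4 := by
  have correction_nonneg : 0 ≤ (6 * m - 4) * (m - 1) := mul_nonneg (by linarith) (by linarith)
  rw [hlLowerExponent, div_mul_div_comm, div_le_div_iff₀ (by positivity) (by norm_num)]
  linarith

lemma hlLowerExponent_three_le_one_div_hlExponent (hp : 0 < p) :
    hlLowerExponent 3 p ≤ 1 / hlExponent 3 p := by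
  rw [one_div_hlExponent, hlLowerExponent, div_mul_div_comm,
    div_le_div_iff₀ (by positivity) (by positivity)]
  nlinarith

end Exponents

lemma two_rpow_div_four_le_coeffNorm {m : ℕ} (hm : 2 ≤ m) (hm3 : m ≠ 3) {s : ℝ} (hs : 0 < s)
    (hs2 : s ≤ 2) :
    (2 : ℝ) ^ ((m : ℝ) / 4) ≤ coeffNorm s m 2 (sqSubSqPowCoeff m) := by
  have centralBinom_bound : (2 : ℝ) ^ m ≤ ((m / 2).centralBinom : ℝ) ^ 2 := by
    exact_mod_cast two_pow_le_centralBinom_half_sq hm hm3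
  calc (2 : ℝ) ^ ((m : ℝ) / 4) = ((2 : ℝ) ^ m) ^ (1 / 4 : ℝ) := by
        rw [← Real.rpow_natCast, ← Real.rpow_mul zero_le_two, mul_one_div]
    _ ≤ (((m / 2).centralBinom : ℝ) ^ 2) ^ (1 / 4 : ℝ) := by gcongr
    _ = ((m / 2).centralBinom : ℝ) ^ (1 / 2 : ℝ) := by
        rw [← Real.rpow_natCast, ← Real.rpow_mul (Nat.cast_nonneg _)]
        norm_num
    _ = coeffNorm 2 m 2 (sqSubSqPowCoeff m) := by
        rw [coeffNorm, sum_abs_sqSubSqPowCoeff_rpow_two]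
    _ ≤ coeffNorm s m 2 (sqSubSqPowCoeff m) := rpow_sum_abs_rpow_le_of_exponent_le _ _ hs hs2

lemma two_rpow_hlLowerExponent_le_coeffNorm {m : ℕ} (hm : 2 ≤ m) {p : ℝ} (hp : 2 * (m : ℝ) ≤ p) :
    (2 : ℝ) ^ hlLowerExponent m p ≤ coeffNorm (hlExponent m p) m 2 (sqSubSqPowCoeff m) := by
  have m_ge_two : (2 : ℝ) ≤ m := by exact_mod_cast hm
  have p_pos : 0 < p := by linarith
  have exponent_pos : 0 < hlExponent m p := hlExponent_pos (by linarith) hp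
  obtain rfl | hm3 := eq_or_ne m 3
  · rw [coeffNorm, sum_abs_sqSubSqPowCoeff_three_rpow exponent_pos.ne']
    exact Real.rpow_le_rpow_of_exponent_le one_le_two
      (hlLowerExponent_three_le_one_div_hlExponent p_pos)
  · calc (2 : ℝ) ^ hlLowerExponent m p ≤ 2 ^ ((m : ℝ) / 4) :=
          Real.rpow_le_rpow_of_exponent_le one_le_two
            (hlLowerExponent_le_div_four (by linarith) p_pos)
      _ ≤ coeffNorm (hlExponent m p) m 2 (sqSubSqPowCoeff m) :=
          two_rpow_div_four_le_coeffNorm hm hm3 exponent_pos (hlExponent_le_two (by linarith) hp)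

theorem real_HL_lower_bound_general (m : ℕ) (hm : 2 ≤ m) (p : ℝ) (hp : 2 * (m : ℝ) ≤ p) (D : ℝ)
    (h : ∀ a : (Fin 2 → ℕ) → ℝ,
      (∑ α ∈ Finset.Nat.antidiagonalTuple 2 m, |a α|
          ^ (2 * (m : ℝ) * p / ((m : ℝ) * p + p - 2 * m)))
        ^ (((m : ℝ) * p + p - 2 * m) / (2 * (m : ℝ) * p)) ≤ D * polyNorm p m 2 a) :
    ((2 : ℝ) ^ ((1 : ℝ) / 16)) ^ m ≤
        2 ^ ((((m : ℝ) * p + p - 6 * m + 4) / (4 * p)) * (((m : ℝ) - 1) / m)) ∧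
      2 ^ ((((m : ℝ) * p + p - 6 * m + 4) / (4 * p)) * (((m : ℝ) - 1) / m)) ≤ D := by
  have m_ge_two : (2 : ℝ) ≤ m := by exact_mod_cast hm
  constructor
  · calc ((2 : ℝ) ^ ((1 : ℝ) / 16)) ^ m = 2 ^ ((m : ℝ) / 16) := by
          rw [← Real.rpow_mul_natCast zero_le_two, one_div_mul_eq_div]
      _ ≤ 2 ^ hlLowerExponent m p :=
          Real.rpow_le_rpow_of_exponent_le one_le_two (div_sixteen_le_hlLowerExponent m_ge_two hp)
  · have coeffNorm_le : coeffNorm (hlExponent m p) m 2 (sqSubSqPowCoeff m)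
        ≤ D * polyNorm p m 2 (sqSubSqPowCoeff m) := by
      rw [coeffNorm, one_div_hlExponent]
      exact h _
    have lower_le_mul : (2 : ℝ) ^ hlLowerExponent m p ≤ D * polyNorm p m 2 (sqSubSqPowCoeff m) :=
      (two_rpow_hlLowerExponent_le_coeffNorm hm hp).trans coeffNorm_le
    have D_pos : 0 < D := pos_of_mul_pos_left
      ((Real.rpow_pos_of_pos two_pos _).trans_le lower_le_mul) (polyNorm_nonneg p m 2 _)
    exact lower_le_mul.trans (mul_le_of_le_one_right D_pos.le
      (polyNorm_sqSubSqPowCoeff_le_one (by linarith) m))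

/-- For `m ≥ 2` and `2m ≤ p < ∞`, any constant `D` for the real polynomial
Hardy–Littlewood inequality satisfies
`(2^{1/16})^m ≤ 2^{((mp+p-6m+4)/(4p))·((m-1)/m)} ≤ D`. -/
theorem real_HL_lower_bound (m : ℕ) (hm : 2 ≤ m)
    (p : ℝ) (hp : 2 * (m : ℝ) ≤ p) (D : ℝ) (hD : 0 < D)
    (h : ∀ n : ℕ, 1 ≤ n → ∀ a : (Fin n → ℕ) → ℝ,
      (∑ α ∈ Finset.Nat.antidiagonalTuple n m, |a α|
          ^ (2 * (m : ℝ) * p / ((m : ℝ) * p + p - 2 * m)))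
        ^ (((m : ℝ) * p + p - 2 * m) / (2 * (m : ℝ) * p)) ≤ D * polyNorm p m n a) :
    ((2 : ℝ) ^ ((1 : ℝ) / 16)) ^ (m : ℕ) ≤
        2 ^ ((((m : ℝ) * p + p - 6 * m + 4) / (4 * p)) * (((m : ℝ) - 1) / m)) ∧
      2 ^ ((((m : ℝ) * p + p - 6 * m + 4) / (4 * p)) * (((m : ℝ) - 1) / m)) ≤ D :=
  real_HL_lower_bound_general m hm p hp D (h 2 one_le_two)
end
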